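/- The logistic loss ℓ(α) = log(1 + exp(−α)) is not order-preserving for pointwise risks under class-conditional label noise: there exist a probability space, a random feature vector X, a {0,1}-valued random label Y, a noise level γ ∈ (1/2, 1], a {0,1}-valued random variable ε independent of (X, Y) with P(ε = 1) = γ defining the noisy label Ỹ = εY + (1−ε)(1−Y), and two measurable scorers f, g with all four risks L(f), L(g), L̃(f), L̃(g) finite, such that L̃(f) − L̃(g) ≠ (2γ−1)·(L(f) − L(g)). -/

import Mathlib

open MeasureTheory ProbabilityTheory

/-!
Since `2Ỹ - 1 = (2ε - 1)(2Y - 1)` and `ε` is independent of `(X, Y)`, the noisy risk is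
`L̃(f) = γ L(f) + (1 - γ) L(-f)`. Order preservation for `γ < 1` therefore forces
`L(f) + L(-f)` to be the same for all scorers. For the logistic loss
`ℓ(α) + ℓ(-α) = log (2 + 2 cosh α)` has its strict minimum at `α = 0`, so that
every scorer that is not almost surely zero breaks it when compared with the zero scorer.
-/

/-- The logistic loss `ℓ(α) = log (1 + exp (-α))` as a function of the margin `α`. -/
noncomputable def logisticLoss (α : ℝ) : ℝ := Real.log (1 + Real.exp (-α))

theorem measurable_logisticLoss : Measurable logisticLoss := by
  unfold logisticLoss
  fun_prop

theorem logisticLoss_nonneg (α : ℝ) : 0 ≤ logisticLoss α :=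
  Real.log_nonneg (le_add_of_nonneg_right (Real.exp_pos _).le)

theorem logisticLoss_le (α : ℝ) : logisticLoss α ≤ Real.log 2 + |α| := by
  have hexp : 1 + Real.exp (-α) ≤ 2 * Real.exp |α| := by
    have h_one : 1 ≤ Real.exp |α| := Real.one_le_exp (abs_nonneg α)
    have h_neg : Real.exp (-α) ≤ Real.exp |α| := Real.exp_le_exp.2 (neg_le_abs α)
    linarith
  calc
    logisticLoss α ≤ Real.log (2 * Real.exp |α|) := Real.log_le_log (by positivity) hexp
    _ = Real.log 2 + |α| := by
      rw [Real.log_mul two_ne_zero (Real.exp_ne_zero _), Real.log_exp]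

theorem logisticLoss_add_neg (α : ℝ) :
    logisticLoss α + logisticLoss (-α) = Real.log (2 + 2 * Real.cosh α) := by
  unfold logisticLoss
  rw [← Real.log_mul (by positivity) (by positivity), Real.cosh_eq]
  congr 1
  have hexp : Real.exp (-α) * Real.exp α = 1 := by
    rw [← Real.exp_add, neg_add_cancel, Real.exp_zero]
  rw [neg_neg]
  linear_combination hexp

theorem two_mul_logisticLoss_zero_lt {α : ℝ} (hα : α ≠ 0) :
    2 * logisticLoss 0 < logisticLoss α + logisticLoss (-α) := by
  have hcosh : 1 < Real.cosh α := Real.one_lt_cosh.2 hα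
  calc
    2 * logisticLoss 0 = logisticLoss 0 + logisticLoss (-0) := by rw [neg_zero, two_mul]
    _ = Real.log (2 + 2 * Real.cosh 0) := logisticLoss_add_neg 0
    _ < Real.log (2 + 2 * Real.cosh α) := by
      rw [Real.cosh_zero]
      exact Real.log_lt_log (by norm_num) (by linarith)
    _ = logisticLoss α + logisticLoss (-α) := (logisticLoss_add_neg α).symm

section Risk

variable {Ω 𝒳 : Type*}

/-- The margin `f(X)(2Y - 1)` of a scorer `f` on an example with label `Y ∈ {0, 1}`. -/
def margin (X : Ω → 𝒳) (Y : Ω → ℝ) (f : 𝒳 → ℝ) (ω : Ω) : ℝ := f (X ω) * (2 * Y ω - 1)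

/-- The corrupted label `Ỹ = εY + (1 - ε)(1 - Y)`, which keeps `Y` where `ε = 1` and flips it
where `ε = 0`. -/
def noisyLabel (e Y : Ω → ℝ) (ω : Ω) : ℝ := e ω * Y ω + (1 - e ω) * (1 - Y ω)

theorem margin_neg (X : Ω → 𝒳) (Y : Ω → ℝ) (f : 𝒳 → ℝ) (ω : Ω) :
    margin X Y (-f) ω = -margin X Y f ω :=
  neg_mul _ _

theorem margin_ne_zero_iff {X : Ω → 𝒳} {Y : Ω → ℝ} {f : 𝒳 → ℝ} {ω : Ω}
    (hY : Y ω = 0 ∨ Y ω = 1) : margin X Y f ω ≠ 0 ↔ f (X ω) ≠ 0 := by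
  unfold margin
  rcases hY with hY | hY <;> norm_num [hY]

theorem loss_margin_noisyLabel (ℓ : ℝ → ℝ) (X : Ω → 𝒳) (Y : Ω → ℝ) (f : 𝒳 → ℝ) {e : Ω → ℝ}
    {ω : Ω} (he : e ω = 0 ∨ e ω = 1) :
    ℓ (margin X (noisyLabel e Y) f ω) =
      e ω * ℓ (margin X Y f ω) + (1 - e ω) * ℓ (margin X Y (-f) ω) := by
  have hmargin : margin X (noisyLabel e Y) f ω = (2 * e ω - 1) * margin X Y f ω := by
    unfold margin noisyLabel
    ring
  rw [hmargin, margin_neg]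
  rcases he with he | he <;> norm_num [he]

variable [MeasurableSpace Ω] {P : Measure Ω} {X : Ω → 𝒳} {Y e : Ω → ℝ} {γ : ℝ}

/-- The pointwise risk `E[ℓ(f(X)(2Y - 1))]` of a scorer `f` under the loss `ℓ`; the junk value `0`
when the loss is not integrable. -/
noncomputable def pointwiseRisk (P : Measure Ω) (ℓ : ℝ → ℝ) (X : Ω → 𝒳) (Y : Ω → ℝ)
    (f : 𝒳 → ℝ) : ℝ :=
  ∫ ω, ℓ (margin X Y f ω) ∂P

theorem pointwiseRisk_zero [IsProbabilityMeasure P] (ℓ : ℝ → ℝ) (X : Ω → 𝒳) (Y : Ω → ℝ) :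
    pointwiseRisk P ℓ X Y 0 = ℓ 0 := by
  simp [pointwiseRisk, margin]

theorem integrable_margin {f : 𝒳 → ℝ} (hY : AEStronglyMeasurable Y P)
    (hY01 : ∀ ω, Y ω = 0 ∨ Y ω = 1)
    (hf : Integrable (fun ω => f (X ω)) P) : Integrable (margin X Y f) P := by
  refine hf.mono (hf.1.mul ((hY.const_mul 2).sub aestronglyMeasurable_const))
    (ae_of_all _ fun ω => ?_)
  unfold margin
  rcases hY01 ω with hω | hω <;> norm_num [hω]

theorem integrable_logisticLoss_comp [IsFiniteMeasure P] {m : Ω → ℝ}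
    (hm : Integrable m P) : Integrable (fun ω => logisticLoss (m ω)) P := by
  refine ((integrable_const (Real.log 2)).add hm.abs).mono'
    (measurable_logisticLoss.comp_aemeasurable hm.aemeasurable).aestronglyMeasurable
    (ae_of_all _ fun ω => ?_)
  rw [Real.norm_of_nonneg (logisticLoss_nonneg _)]
  exact logisticLoss_le (m ω)

theorem two_mul_loss_zero_lt_pointwiseRisk_add_neg [IsProbabilityMeasure P]
    {ℓ : ℝ → ℝ} (hℓ : ∀ α ≠ 0, 2 * ℓ 0 < ℓ α + ℓ (-α)) {f : 𝒳 → ℝ}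
    (hf : Integrable (fun ω => ℓ (margin X Y f ω)) P)
    (hf_neg : Integrable (fun ω => ℓ (margin X Y (-f) ω)) P)
    (hne : ¬ margin X Y f =ᵐ[P] 0) :
    2 * ℓ 0 < pointwiseRisk P ℓ X Y f + pointwiseRisk P ℓ X Y (-f) := by
  let symLoss : Ω → ℝ := fun ω => ℓ (margin X Y f ω) + ℓ (margin X Y (-f) ω)
  have hsym_int : Integrable symLoss P := hf.add hf_neg
  have hlt : ∀ ω, margin X Y f ω ≠ 0 → 2 * ℓ 0 < symLoss ω := fun ω hω => by
    simpa only [symLoss, margin_neg] using hℓ _ hω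
  have hle : ∀ ω, 2 * ℓ 0 ≤ symLoss ω := fun ω => by
    obtain hω | hω := eq_or_ne (margin X Y f ω) 0
    · simp only [symLoss, margin_neg, hω, neg_zero, two_mul, le_refl]
    · exact (hlt ω hω).le
  have hint_ne : ∫ _, 2 * ℓ 0 ∂P ≠ ∫ ω, symLoss ω ∂P := fun h_eq =>
    hne (((integral_eq_iff_of_ae_le (integrable_const _) hsym_int (ae_of_all _ hle)).1 h_eq).mono
      fun ω hω => not_not.1 fun hmargin => (hlt ω hmargin).ne hω)
  calc
    2 * ℓ 0 = ∫ _, 2 * ℓ 0 ∂P := by rw [integral_const, probReal_univ, one_smul]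
    _ < ∫ ω, symLoss ω ∂P :=
      (integral_mono (integrable_const _) hsym_int hle).lt_of_ne hint_ne
    _ = pointwiseRisk P ℓ X Y f + pointwiseRisk P ℓ X Y (-f) := integral_add hf hf_neg

variable [MeasurableSpace 𝒳]

/-- Class-conditional label noise with the same flip probability `1 - γ` for both classes: `e` is a
Bernoulli variable of parameter `γ`, independent of the clean example `(X, Y)`. -/
structure IsLabelNoise (P : Measure Ω) (X : Ω → 𝒳) (Y e : Ω → ℝ) (γ : ℝ) : Prop where
  measurable : Measurable e
  eq_zero_or_one : ∀ ω, e ω = 0 ∨ e ω = 1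
  indepFun : IndepFun (fun ω => (X ω, Y ω)) e P
  measureReal_eq_one : P.real {ω | e ω = 1} = γ

namespace IsLabelNoise

theorem integrable [IsFiniteMeasure P] (h : IsLabelNoise P X Y e γ) : Integrable e P := by
  refine .of_bound h.measurable.aestronglyMeasurable 1 (ae_of_all _ fun ω => ?_)
  rcases h.eq_zero_or_one ω with hω | hω <;> norm_num [hω]

theorem integral_eq (h : IsLabelNoise P X Y e γ) : ∫ ω, e ω ∂P = γ := by
  have hind : e = {ω | e ω = 1}.indicator 1 := by
    ext ω
    rcases h.eq_zero_or_one ω with hω | hω <;> simp [hω]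
  calc
    ∫ ω, e ω ∂P = ∫ ω, {ω | e ω = 1}.indicator 1 ω ∂P := by rw [← hind]
    _ = P.real {ω | e ω = 1} :=
      integral_indicator_one (h.measurable (measurableSet_singleton 1))
    _ = γ := h.measureReal_eq_one

theorem measure_eq_one [IsFiniteMeasure P] (h : IsLabelNoise P X Y e γ) :
    P {ω | e ω = 1} = ENNReal.ofReal γ := by
  rw [← h.measureReal_eq_one, ofReal_measureReal]

theorem indepFun_loss_margin (h : IsLabelNoise P X Y e γ) {ℓ : ℝ → ℝ} (hℓ : Measurable ℓ)
    {f : 𝒳 → ℝ} (hf : Measurable f) : IndepFun e (fun ω => ℓ (margin X Y f ω)) P :=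
  (h.indepFun.comp (φ := fun z : 𝒳 × ℝ => ℓ (f z.1 * (2 * z.2 - 1))) (by fun_prop)
    measurable_id).symm

theorem pointwiseRisk_noisyLabel [IsProbabilityMeasure P] (h : IsLabelNoise P X Y e γ)
    {ℓ : ℝ → ℝ} (hℓ : Measurable ℓ) {f : 𝒳 → ℝ} (hf : Measurable f)
    (hf_int : Integrable (fun ω => ℓ (margin X Y f ω)) P)
    (hf_neg_int : Integrable (fun ω => ℓ (margin X Y (-f) ω)) P) :
    pointwiseRisk P ℓ X (noisyLabel e Y) f =
      γ * pointwiseRisk P ℓ X Y f + (1 - γ) * pointwiseRisk P ℓ X Y (-f) := by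
  have hkeep := h.indepFun_loss_margin hℓ hf
  have hflip : IndepFun (fun ω => 1 - e ω) (fun ω => ℓ (margin X Y (-f) ω)) P :=
    (h.indepFun_loss_margin hℓ hf.neg).comp (measurable_const.sub measurable_id) measurable_id
  have hflip_int : Integrable (fun ω => 1 - e ω) P := (integrable_const 1).sub h.integrable
  have hflip_prob : ∫ ω, (1 - e ω) ∂P = 1 - γ := by
    rw [integral_sub (integrable_const 1) h.integrable, h.integral_eq, integral_const,
      probReal_univ, one_smul]
  calc
    pointwiseRisk P ℓ X (noisyLabel e Y) f
    _ = ∫ ω, (e ω * ℓ (margin X Y f ω) + (1 - e ω) * ℓ (margin X Y (-f) ω)) ∂P :=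
      integral_congr_ae (ae_of_all _ fun ω =>
        loss_margin_noisyLabel ℓ X Y f (h.eq_zero_or_one ω))
    _ = (∫ ω, e ω * ℓ (margin X Y f ω) ∂P) + ∫ ω, (1 - e ω) * ℓ (margin X Y (-f) ω) ∂P :=
      integral_add (hkeep.integrable_mul h.integrable hf_int)
        (hflip.integrable_mul hflip_int hf_neg_int)
    _ = γ * pointwiseRisk P ℓ X Y f + (1 - γ) * pointwiseRisk P ℓ X Y (-f) := by
      rw [hkeep.integral_fun_mul_eq_mul_integral h.integrable.1 hf_int.1,
        hflip.integral_fun_mul_eq_mul_integral hflip_int.1 hf_neg_int.1,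
        h.integral_eq, hflip_prob]
      rfl

end IsLabelNoise

theorem isLabelNoise_prod_bernoulliMeasure [IsProbabilityMeasure P] (hX : Measurable X)
    (hY : Measurable Y) (p : unitInterval) :
    IsLabelNoise (P.prod (bernoulliMeasure true false p)) (fun ω => X ω.1) (fun ω => Y ω.1)
      (fun ω => if ω.2 then 1 else 0) p := by
  have hcoin : Measurable fun b : Bool => if b then (1 : ℝ) else 0 := measurable_of_finite _
  have hkeep : {ω : Ω × Bool | (if ω.2 then (1 : ℝ) else 0) = 1} = Set.univ ×ˢ {true} := by
    ext ω
    simp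
  refine ⟨hcoin.comp measurable_snd, fun ω => by cases ω.2 <;> simp,
    indepFun_prod (hX.prodMk hY) hcoin, ?_⟩
  rw [hkeep, measureReal_prod_prod, probReal_univ, one_mul]
  exact bernoulliMeasure_real_apply_of_mem_of_notMem p (measurableSet_singleton true) rfl (by simp)

theorem logistic_loss_not_order_preserving_general [IsProbabilityMeasure P]
    (h : IsLabelNoise P X Y e γ) (hγ : γ ≠ 1) (hY : AEStronglyMeasurable Y P)
    (hY01 : ∀ ω, Y ω = 0 ∨ Y ω = 1) {f : 𝒳 → ℝ} (hf : Measurable f)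
    (hf_int : Integrable (fun ω => f (X ω)) P) (hf_ne : ¬ (fun ω => f (X ω)) =ᵐ[P] 0) :
    pointwiseRisk P logisticLoss X (noisyLabel e Y) f
        - pointwiseRisk P logisticLoss X (noisyLabel e Y) 0
      ≠ (2 * γ - 1)
        * (pointwiseRisk P logisticLoss X Y f - pointwiseRisk P logisticLoss X Y 0) := by
  have hm_ne : ¬ margin X Y f =ᵐ[P] 0 := fun h_zero =>
    hf_ne (h_zero.mono fun ω => not_imp_not.1 (margin_ne_zero_iff (hY01 ω)).2)
  have hm := integrable_margin hY hY01 hf_int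
  have hm_neg := integrable_margin (f := -f) hY hY01 hf_int.neg
  have hloss := integrable_logisticLoss_comp hm
  have hloss_neg := integrable_logisticLoss_comp hm_neg
  have hlt := two_mul_loss_zero_lt_pointwiseRisk_add_neg
    (fun _ => two_mul_logisticLoss_zero_lt) hloss hloss_neg hm_ne
  intro heq
  rw [h.pointwiseRisk_noisyLabel measurable_logisticLoss hf hloss hloss_neg,
    pointwiseRisk_zero, pointwiseRisk_zero] at heq
  have hdefect : (1 - γ) * (pointwiseRisk P logisticLoss X Y f
      + pointwiseRisk P logisticLoss X Y (-f) - 2 * logisticLoss 0) = 0 := by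
    linear_combination heq
  exact mul_ne_zero (sub_ne_zero.2 hγ.symm) (sub_pos.2 hlt).ne' hdefect

end Risk

/-- The logistic loss `ℓ(α) = log(1 + exp(-α))` is not order-preserving
for pointwise risks under class-conditional label noise: there exist a probability
space, features `X`, a `{0,1}`-valued label `Y`, `γ ∈ (1/2, 1]`, noise `ε ⟂ (X,Y)`
with `P(ε=1) = γ` (defining `Ỹ = εY + (1-ε)(1-Y)`), and scorers `f, g` with all four
risks finite, such that `L̃(f) - L̃(g) ≠ (2γ-1)(L(f) - L(g))`. -/
theorem logistic_loss_not_order_preserving :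
    ∃ (Ω : Type) (_ : MeasurableSpace Ω) (P : Measure Ω) (𝒳 : Type)
      (_ : MeasurableSpace 𝒳) (X : Ω → 𝒳) (Y e : Ω → ℝ) (γ : ℝ) (f g : 𝒳 → ℝ),
      IsProbabilityMeasure P ∧
      Measurable X ∧ Measurable Y ∧ Measurable e ∧ Measurable f ∧ Measurable g ∧
      (∀ ω, Y ω = 0 ∨ Y ω = 1) ∧ (∀ ω, e ω = 0 ∨ e ω = 1) ∧
      γ ∈ Set.Ioc (1 / 2 : ℝ) 1 ∧
      IndepFun (fun ω => (X ω, Y ω)) e P ∧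
      P {ω | e ω = 1} = ENNReal.ofReal γ ∧
      Integrable (fun ω => Real.log (1 + Real.exp (-(f (X ω) * (2 * Y ω - 1))))) P ∧
      Integrable (fun ω => Real.log (1 + Real.exp (-(g (X ω) * (2 * Y ω - 1))))) P ∧
      Integrable (fun ω => Real.log (1 + Real.exp
        (-(f (X ω) * (2 * (e ω * Y ω + (1 - e ω) * (1 - Y ω)) - 1))))) P ∧
      Integrable (fun ω => Real.log (1 + Real.exp
        (-(g (X ω) * (2 * (e ω * Y ω + (1 - e ω) * (1 - Y ω)) - 1))))) P ∧
      (∫ ω, Real.log (1 + Real.exp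
          (-(f (X ω) * (2 * (e ω * Y ω + (1 - e ω) * (1 - Y ω)) - 1)))) ∂P)
        - (∫ ω, Real.log (1 + Real.exp
            (-(g (X ω) * (2 * (e ω * Y ω + (1 - e ω) * (1 - Y ω)) - 1)))) ∂P)
        ≠ (2 * γ - 1)
          * ((∫ ω, Real.log (1 + Real.exp (-(f (X ω) * (2 * Y ω - 1)))) ∂P)
              - (∫ ω, Real.log (1 + Real.exp (-(g (X ω) * (2 * Y ω - 1)))) ∂P)) := by
  let p : unitInterval := ⟨3 / 4, by norm_num, by norm_num⟩
  let coin := bernoulliMeasure true false (⟨1 / 2, by norm_num, by norm_num⟩ : unitInterval)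
  let label : Bool → ℝ := fun b => if b then 1 else 0
  have hlabel : Measurable label := measurable_of_finite label
  have hlabel01 : ∀ b, label b = 0 ∨ label b = 1 := by simp [label]
  have hnoise := isLabelNoise_prod_bernoulliMeasure (P := coin) measurable_id hlabel p
  exact ⟨Bool × Bool, inferInstance, coin.prod (bernoulliMeasure true false p), Bool,
    inferInstance, fun ω => ω.1, fun ω => label ω.1, fun ω => label ω.2, 3 / 4, 1, 0,
    inferInstance, measurable_fst, hlabel.comp measurable_fst, hlabel.comp measurable_snd,
    measurable_const, measurable_const, fun ω => hlabel01 ω.1, fun ω => hlabel01 ω.2,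
    ⟨by norm_num, by norm_num⟩, hnoise.indepFun,
    hnoise.measure_eq_one, .of_finite, .of_finite, .of_finite, .of_finite,
    logistic_loss_not_order_preserving_general hnoise (by norm_num [p])
      (hlabel.comp measurable_fst).aestronglyMeasurable (fun ω => hlabel01 ω.1) measurable_const
      .of_finite (by simp [Filter.EventuallyEq, IsProbabilityMeasure.ne_zero])⟩
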